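/- Let S be an ordered semigroup with real multiplication satisfying axioms O1–O6, and let f, g ∈ S with f ∝ g. Then the set { h ∈ S : there exists h' ∈ S with h ≪ h', h' ≤ f, and h' ≤ g } is upward directed: for any two elements p, q of this set there is an element r of this set with p ≤ r and q ≤ r. -/

import Mathlib

open scoped ENNReal

/-- `CC s t` : `s` is (sequentially) compactly contained in `t`, written `s ≪ t`. -/
def CC {S : Type*} [AddCommMonoid S] [PartialOrder S] (s t : S) : Prop :=
  ∀ u : ℕ → S, Monotone u → ∀ x : S, IsLUB (Set.range u) x → t ≤ x → ∃ n, s ≤ u n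

/-- An ordered semigroup (positive, with translation invariant order) satisfying axioms O1-O5. -/
structure CuO5 (S : Type*) [AddCommMonoid S] [PartialOrder S] : Prop where
  addRightMono : ∀ {s t : S}, s ≤ t → ∀ r : S, s + r ≤ t + r
  zeroLe : ∀ s : S, 0 ≤ s
  O1 : ∀ u : ℕ → S, Monotone u → ∃ x : S, IsLUB (Set.range u) x
  O2 : ∀ s : S, ∃ u : ℕ → S, (∀ n, CC (u n) (u (n + 1))) ∧ IsLUB (Set.range u) s
  O3 : ∀ {s₁ t₁ s₂ t₂ : S}, CC s₁ t₁ → CC s₂ t₂ → CC (s₁ + s₂) (t₁ + t₂)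
  O4 : ∀ u v : ℕ → S, Monotone u → Monotone v → ∀ x y : S,
    IsLUB (Set.range u) x → IsLUB (Set.range v) y →
    IsLUB (Set.range fun n => u n + v n) (x + y)
  O5 : ∀ {s' s t : S}, CC s' s → s ≤ t → ∃ r : S, s' + r ≤ t ∧ t ≤ s + r

/-- Axioms O1-O6. -/
structure CuO6 (S : Type*) [AddCommMonoid S] [PartialOrder S] extends CuO5 S : Prop where
  O6 : ∀ {s r t : S}, s ≤ r + t → ∀ {s' : S}, CC s' s →
    ∃ r' t' : S, s' ≤ r' + t' ∧ r' ≤ r ∧ r' ≤ s ∧ t' ≤ t ∧ t' ≤ s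

/-- A functional on `S`: additive, order preserving, zero preserving map to `[0,∞]`
preserving suprema of increasing sequences. -/
structure IsFunctional {S : Type*} [AddCommMonoid S] [PartialOrder S] (l : S → ℝ≥0∞) : Prop where
  map_zero : l 0 = 0
  map_add : ∀ s t : S, l (s + t) = l s + l t
  mono : ∀ {s t : S}, s ≤ t → l s ≤ l t
  map_sup : ∀ u : ℕ → S, Monotone u → ∀ x : S, IsLUB (Set.range u) x → l x = ⨆ n, l (u n)

/-- Real multiplication on `S` : a map `(0,∞] × S → S` additive, order preserving and
sup-(of increasing sequences)-preserving in each variable, with `1 · s = s`.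
Scalars are elements of `ℝ≥0∞` required to be positive. -/
structure RealMul (S : Type*) [AddCommMonoid S] [PartialOrder S] where
  smul : ℝ≥0∞ → S → S
  add_left : ∀ {a b : ℝ≥0∞}, 0 < a → 0 < b → ∀ s : S, smul (a + b) s = smul a s + smul b s
  add_right : ∀ {a : ℝ≥0∞}, 0 < a → ∀ s t : S, smul a (s + t) = smul a s + smul a t
  mono_left : ∀ {a b : ℝ≥0∞}, 0 < a → a ≤ b → ∀ s : S, smul a s ≤ smul b s
  mono_right : ∀ {a : ℝ≥0∞}, 0 < a → ∀ {s t : S}, s ≤ t → smul a s ≤ smul a t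
  sup_left : ∀ u : ℕ → ℝ≥0∞, Monotone u → 0 < u 0 → ∀ s : S,
    IsLUB (Set.range fun n => smul (u n) s) (smul (⨆ n, u n) s)
  sup_right : ∀ {a : ℝ≥0∞}, 0 < a → ∀ u : ℕ → S, Monotone u → ∀ x : S,
    IsLUB (Set.range u) x → IsLUB (Set.range fun n => smul a (u n)) (smul a x)
  one_smul : ∀ s : S, smul 1 s = s

/-- `D` is a dense subset of `S`: every element of `S` is the supremum of a rapidly
increasing sequence of elements of `D`. -/
def IsDenseSub {S : Type*} [AddCommMonoid S] [PartialOrder S] (D : Set S) : Prop :=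
  ∀ s : S, ∃ u : ℕ → S, (∀ n, u n ∈ D) ∧ (∀ n, CC (u n) (u (n + 1))) ∧ IsLUB (Set.range u) s

/-- `m` is the least upper bound of the functionals `l₁` and `l₂` in `F(S)`
(pointwise order). -/
def IsFSup {S : Type*} [AddCommMonoid S] [PartialOrder S] (l₁ l₂ m : S → ℝ≥0∞) : Prop :=
  IsFunctional m ∧ (∀ s, l₁ s ≤ m s) ∧ (∀ s, l₂ s ≤ m s) ∧
    ∀ d : S → ℝ≥0∞, IsFunctional d → (∀ s, l₁ s ≤ d s) → (∀ s, l₂ s ≤ d s) → ∀ s, m s ≤ d s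

/-- `m` is the greatest lower bound of the functionals `l₁` and `l₂` in `F(S)`
(pointwise order). -/
def IsFInf {S : Type*} [AddCommMonoid S] [PartialOrder S] (l₁ l₂ m : S → ℝ≥0∞) : Prop :=
  IsFunctional m ∧ (∀ s, m s ≤ l₁ s) ∧ (∀ s, m s ≤ l₂ s) ∧
    ∀ d : S → ℝ≥0∞, IsFunctional d → (∀ s, d s ≤ l₁ s) → (∀ s, d s ≤ l₂ s) → ∀ s, d s ≤ m s

/-- An isomorphism of ordered semigroups between `S` and the extended natural numbers. -/
def IsOrdSemigroupIso {S : Type*} [AddCommMonoid S] [PartialOrder S] (e : S ≃ ℕ∞) : Prop :=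
  (∀ a b : S, e (a + b) = e a + e b) ∧ e 0 = 0 ∧ ∀ a b : S, a ≤ b ↔ e a ≤ e b

/-!
If elements could be subtracted exactly, the upper bound of `p` and `q` below `f` and `g` would be
`p + t`, where `t` lies below both `f - p` and `g - p`. Such a `t` is provided by (O6) from
`f - p ≤ (f - q) + (g - p)`, and `q ≤ p + t` because `f - p` exceeds `t` by at most `f - q`.

(O5) yields only approximate differences. The argument is therefore run on `N • p`, `N • q`,
`N • f`, `N • g`: adding up `N` terms of a rapidly increasing sequence makes the errors independent
of `N`, so that after division by `N` they disappear as `N → ∞`. Division also justifies cancelling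
`z` from `x + z ≤ y + z` when `z ∝ y`, since then `N • x ≤ N • y + z` for all `N`.

The errors are multiples of `f`, and have to be absorbed by `g` as well. To this end, given
`p ≪ p' ≤ f, g` and `q ≪ q' ≤ f, g`, another application of (O6) first replaces `f` with an element
below both `f` and `p' + q' ≤ 2 • g`.
-/

open Filter Finset

theorem nsmul_add_le_nsmul_add {M : Type*} [AddCommMonoid M] [Preorder M] [IsOrderedAddMonoid M]
    {x y z : M} (h : x + z ≤ y + z) (n : ℕ) : n • x + z ≤ n • y + z := by
  induction n with
  | zero => simp
  | succ n ih =>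
    calc (n + 1) • x + z = n • x + (x + z) := by rw [succ_nsmul, add_assoc]
      _ ≤ n • x + (y + z) := by gcongr
      _ = (n • x + z) + y := by abel
      _ ≤ (n • y + z) + y := by gcongr
      _ = (n + 1) • y + z := by rw [succ_nsmul]; abel

theorem eventually_natCast_add_mul_le {a : ℝ≥0∞} (ha : a < 1) (K : ℕ) :
    ∀ᶠ N : ℕ in atTop, ((N + K : ℕ) : ℝ≥0∞) * a ≤ N := by
  lift a to NNReal using ha.ne_top
  have ha' : (a : ℝ) < 1 := by exact_mod_cast ha
  filter_upwards [(tendsto_natCast_div_add_atTop (K : ℝ)).eventually (lt_mem_nhds ha'),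
    eventually_gt_atTop 0] with N hN hpos
  have : (0 : ℝ) < N + K := by positivity
  rw [lt_div_iff₀' this] at hN
  exact_mod_cast hN.le

section

variable {S : Type*} [AddCommMonoid S] [PartialOrder S]

namespace CC

variable {s s' t t' : S}

theorem le (h : CC s t) : s ≤ t := by
  obtain ⟨_, hn⟩ := h (fun _ => t) monotone_const t (by simp) le_rfl
  exact hn

theorem mono (h : CC s t) (hs : s' ≤ s) (ht : t ≤ t') : CC s' t' := fun u hu x hx hle =>
  (h u hu x hx (ht.trans hle)).imp fun _ hn => hs.trans hn

end CC

theorem monotone_of_cc {u : ℕ → S} (hu : ∀ n, CC (u n) (u (n + 1))) : Monotone u :=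
  monotone_nat_of_le_succ fun n => (hu n).le

namespace CuO5

variable {s t x y : S}

theorem isOrderedAddMonoid (hS : CuO5 S) : IsOrderedAddMonoid S where
  add_le_add_left _ _ h c := hS.addRightMono h c

theorem le_self_add (hS : CuO5 S) (s t : S) : s ≤ s + t :=
  have := hS.isOrderedAddMonoid
  le_add_of_nonneg_right (hS.zeroLe t)

theorem le_add_self (hS : CuO5 S) (s t : S) : s ≤ t + s :=
  have := hS.isOrderedAddMonoid
  le_add_of_nonneg_left (hS.zeroLe t)

theorem cc_zero (hS : CuO5 S) : CC (0 : S) 0 := fun _ _ _ _ _ => ⟨0, hS.zeroLe _⟩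

theorem cc_sum (hS : CuO5 S) {ι : Type*} (I : Finset ι) {u v : ι → S} (h : ∀ i, CC (u i) (v i)) :
    CC (∑ i ∈ I, u i) (∑ i ∈ I, v i) := by
  induction I using Finset.cons_induction with
  | empty => simpa using hS.cc_zero
  | cons i I hi ih => simpa only [sum_cons] using hS.O3 (h i) ih

theorem cc_nsmul (hS : CuO5 S) (h : CC s t) (n : ℕ) : CC (n • s) (n • t) := by
  simpa using hS.cc_sum (range n) fun _ => h

theorem directedOn_cc (hS : CuO5 S) (t : S) : DirectedOn (· ≤ ·) {s | CC s t} := by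
  intro x hx y hy
  obtain ⟨u, hu, ht⟩ := hS.O2 t
  have hmono := monotone_of_cc hu
  obtain ⟨i, hi⟩ := hx u hmono t ht le_rfl
  obtain ⟨j, hj⟩ := hy u hmono t ht le_rfl
  exact ⟨u (max i j), (hu _).mono le_rfl (ht.1 ⟨_, rfl⟩), hi.trans (hmono (le_max_left _ _)),
    hj.trans (hmono (le_max_right _ _))⟩

theorem exists_cc_between (hS : CuO5 S) (h : CC s t) : ∃ x, CC s x ∧ CC x t := by
  obtain ⟨u, hu, ht⟩ := hS.O2 t
  obtain ⟨i, hi⟩ := h u (monotone_of_cc hu) t ht le_rfl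
  exact ⟨u (i + 1), (hu i).mono hi le_rfl, (hu (i + 1)).mono le_rfl (ht.1 ⟨_, rfl⟩)⟩

theorem le_of_forall_cc_le (hS : CuO5 S) (h : ∀ s, CC s x → s ≤ y) : x ≤ y := by
  obtain ⟨u, hu, hx⟩ := hS.O2 x
  refine hx.2 ?_
  rintro _ ⟨n, rfl⟩
  exact h _ ((hu n).mono le_rfl (hx.1 ⟨_, rfl⟩))

theorem exists_cc_le_add (hS : CuO5 S) (h : CC s t) (hle : t ≤ x + y) :
    ∃ y', CC y' y ∧ s ≤ x + y' := by
  have := hS.isOrderedAddMonoid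
  obtain ⟨u, hu, hy⟩ := hS.O2 y
  have hmono := monotone_of_cc hu
  obtain ⟨i, hi⟩ := h (fun n => x + u n) (hmono.const_add x) (x + y)
    (hS.O4 (fun _ => x) u monotone_const hmono x y (by simp) hy) hle
  exact ⟨u i, (hu i).mono le_rfl (hy.1 ⟨_, rfl⟩), hi⟩

/-- The witness is a moving sum `u k + ⋯ + u (k + N - 1)` over a rapidly increasing sequence with
supremum `t`: consecutive sums differ by a single term, so the gaps do not grow with `N`. -/
theorem exists_seq_cc_nsmul (hS : CuO5 S) (h : CC s t) (N : ℕ) :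
    ∃ y : ℕ → S, (∀ k, CC (y k) (y (k + 1))) ∧ N • s ≤ y 0 ∧ (∀ k, y k ≤ N • t) ∧
      ∀ k, y (k + 1) ≤ y k + t := by
  have := hS.isOrderedAddMonoid
  obtain ⟨u, hu, ht⟩ := hS.O2 t
  have hmono := monotone_of_cc hu
  have hle : ∀ i, u i ≤ t := fun i => ht.1 ⟨i, rfl⟩
  obtain ⟨m, hm⟩ := h u hmono t ht le_rfl
  refine ⟨fun k => ∑ i ∈ range N, u (m + k + i), fun k => ?_, ?_, fun k => ?_, fun k => ?_⟩
  · exact hS.cc_sum _ fun i => by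
      simpa only [← add_assoc, add_right_comm _ 1 i] using hu (m + k + i)
  · simpa using card_nsmul_le_sum (range N) (fun i => u (m + 0 + i)) s
      fun i _ => hm.trans (hmono (by lia))
  · simpa using sum_le_card_nsmul (range N) (fun i => u (m + k + i)) t fun i _ => hle _
  · calc ∑ i ∈ range N, u (m + (k + 1) + i)
        ≤ ∑ i ∈ range N, u (m + k + (i + 1)) + u (m + k + 0) := by
          simpa only [add_assoc, add_comm 1] using hS.le_self_add _ _
      _ = ∑ i ∈ range N, u (m + k + i) + u (m + k + N) := by
          rw [← sum_range_succ' fun i => u (m + k + i), sum_range_succ]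
      _ ≤ ∑ i ∈ range N, u (m + k + i) + t := by gcongr; exact hle _

end CuO5

theorem CuO6.exists_add_le (hS : CuO6 S) {y₀ y₁ q q' f : S} (hy : CC y₀ y₁) (hyf : y₁ ≤ f)
    (hq : CC q q') (hqf : q' ≤ f) : ∃ t ≤ q', y₀ + t ≤ f ∧ q ≤ y₁ + t := by
  have := hS.isOrderedAddMonoid
  obtain ⟨a, ha, ha'⟩ := hS.O5 hy hyf
  obtain ⟨s, t, hqst, hs, -, hta, htq⟩ := hS.O6 (hqf.trans ha') hq
  exact ⟨t, htq, (by gcongr : y₀ + t ≤ y₀ + a).trans ha, hqst.trans (by gcongr)⟩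

namespace RealMul

variable {a : ℝ≥0∞} {n : ℕ} {p p' q q' f g s t x y z : S}

theorem nsmul_smul (rm : RealMul S) (ha : 0 < a) (hn : n ≠ 0) (x : S) :
    n • rm.smul a x = rm.smul (n * a) x := by
  rw [← Nat.one_le_iff_ne_zero] at hn
  induction n, hn using Nat.le_induction with
  | base => simp
  | succ n hn ih =>
    have hna : 0 < n * a := ENNReal.mul_pos (by simpa using Nat.one_le_iff_ne_zero.1 hn) ha.ne'
    rw [succ_nsmul, ih, ← rm.add_left hna ha, Nat.cast_succ, add_one_mul]

theorem smul_nsmul (rm : RealMul S) (ha : 0 < a) (hn : n ≠ 0) (x : S) :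
    rm.smul a (n • x) = n • rm.smul a x := by
  rw [← Nat.one_le_iff_ne_zero] at hn
  induction n, hn using Nat.le_induction with
  | base => simp
  | succ n hn ih => rw [succ_nsmul, rm.add_right ha, ih, ← succ_nsmul]

theorem nsmul_inv_smul (rm : RealMul S) (hn : n ≠ 0) (x : S) :
    n • rm.smul (n : ℝ≥0∞)⁻¹ x = x := by
  rw [rm.nsmul_smul (by simp) hn, ENNReal.mul_inv_cancel (by simpa) (by simp), rm.one_smul]

theorem natCast_smul (rm : RealMul S) (hn : n ≠ 0) (x : S) : rm.smul n x = n • x := by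
  simpa [rm.one_smul] using (rm.nsmul_smul zero_lt_one hn x).symm

theorem le_of_nsmul_le_nsmul (rm : RealMul S) (hn : n ≠ 0) (h : n • x ≤ n • y) : x ≤ y := by
  have hpos : 0 < (n : ℝ≥0∞)⁻¹ := by simp
  simpa only [rm.smul_nsmul hpos hn, rm.nsmul_inv_smul hn] using rm.mono_right hpos h

theorem exists_lt_one_le_smul (rm : RealMul S) (h : CC s t) :
    ∃ a : ℝ≥0∞, 0 < a ∧ a < 1 ∧ s ≤ rm.smul a t := by
  obtain ⟨u, hu, hu01, hlim⟩ := exists_seq_strictMono_tendsto' (zero_lt_one' ℝ≥0∞)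
  have hsup := rm.sup_left u hu.monotone (hu01 0).1 t
  rw [iSup_eq_of_tendsto hu.monotone hlim, rm.one_smul] at hsup
  obtain ⟨n, hn⟩ := h _ (fun i _ hij => rm.mono_left (hu01 i).1 (hu.monotone hij) t) t hsup le_rfl
  exact ⟨u n, (hu01 n).1, (hu01 n).2, hn⟩

theorem eventually_le_of_nsmul_le (rm : RealMul S) (h : CC s t) (K : ℕ) :
    ∀ᶠ N : ℕ in atTop, ∀ r : S, N • t ≤ (N + K) • r → s ≤ r := by
  obtain ⟨a, ha, ha1, hs⟩ := rm.exists_lt_one_le_smul h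
  filter_upwards [eventually_natCast_add_mul_le ha1 K, eventually_ne_atTop 0] with N hN hN0 r hr
  have hNK : N + K ≠ 0 := by lia
  refine hs.trans (rm.le_of_nsmul_le_nsmul hNK ?_)
  calc (N + K) • rm.smul a t = rm.smul ((N + K : ℕ) * a) t := rm.nsmul_smul ha hNK t
    _ ≤ rm.smul N t := rm.mono_left (ENNReal.mul_pos (by simpa using hNK) ha.ne') hN t
    _ = N • t := rm.natCast_smul hN0 t
    _ ≤ (N + K) • r := hr

theorem le_of_forall_nsmul_le (rm : RealMul S) (hS : CuO5 S) (K : ℕ)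
    (h : ∀ N : ℕ, N • x ≤ (N + K) • y) : x ≤ y :=
  hS.le_of_forall_cc_le fun _ hs =>
    have ⟨N, hN⟩ := (rm.eventually_le_of_nsmul_le hs K).exists
    hN y (h N)

theorem le_of_add_le_add_right (rm : RealMul S) (hS : CuO5 S) (hz : z ≤ n • y)
    (h : x + z ≤ y + z) : x ≤ y := by
  have := hS.isOrderedAddMonoid
  refine rm.le_of_forall_nsmul_le hS n fun N => ?_
  calc N • x ≤ N • x + z := hS.le_self_add _ _
    _ ≤ N • y + z := nsmul_add_le_nsmul_add h N
    _ ≤ N • y + n • y := by gcongr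
    _ = (N + n) • y := (add_nsmul y N n).symm

theorem exists_le_of_forall_nsmul_le (rm : RealMul S) (hp : CC p p') (hq : CC q q') (K : ℕ)
    (h : ∀ N : ℕ, ∃ w : S, w ≤ (N + K) • f ∧ w ≤ (N + K) • g ∧ N • p' ≤ w ∧ N • q' ≤ w) :
    ∃ r, r ≤ f ∧ r ≤ g ∧ p ≤ r ∧ q ≤ r := by
  obtain ⟨N, hpN, hqN, hN0⟩ := ((rm.eventually_le_of_nsmul_le hp K).and
    ((rm.eventually_le_of_nsmul_le hq K).and (eventually_ne_atTop 0))).exists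
  obtain ⟨w, hwf, hwg, hpw, hqw⟩ := h N
  have hNK : N + K ≠ 0 := by lia
  have hw := rm.nsmul_inv_smul hNK w
  exact ⟨_, rm.le_of_nsmul_le_nsmul hNK (hw.trans_le hwf),
    rm.le_of_nsmul_le_nsmul hNK (hw.trans_le hwg), hpN _ (hpw.trans_eq hw.symm),
    hqN _ (hqw.trans_eq hw.symm)⟩

theorem exists_upper_bound_le_add (rm : RealMul S) (hS : CuO6 S) (hp : CC p p') (hq : CC q q')
    (hpf : p' ≤ f) (hqf : q' ≤ f) : ∃ r, r ≤ f ∧ r ≤ p' + q' ∧ p ≤ r ∧ q ≤ r := by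
  have := hS.isOrderedAddMonoid
  obtain ⟨p₁, hpp₁, hp₁⟩ := hS.exists_cc_between hp
  obtain ⟨q₁, hqq₁, hq₁⟩ := hS.exists_cc_between hq
  refine rm.exists_le_of_forall_nsmul_le hpp₁ hqq₁ 1 fun N => ?_
  obtain ⟨y, hy, hpy, hyp, hgap⟩ := hS.exists_seq_cc_nsmul hp₁ N
  obtain ⟨t, htq, htf, hqt⟩ := hS.exists_add_le (hy 0) ((hyp 1).trans (by gcongr))
    (hS.cc_nsmul hq₁ N) (by gcongr : N • q' ≤ N • f)
  refine ⟨y 0 + t + p', ?_, ?_, ?_, ?_⟩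
  · rw [succ_nsmul]
    gcongr
  · calc y 0 + t + p' ≤ N • p' + N • q' + (p' + q') := by
          gcongr
          exacts [hyp 0, hS.le_self_add _ _]
      _ = (N + 1) • (p' + q') := by rw [succ_nsmul, nsmul_add]
  · rw [add_assoc]
    exact hpy.trans (hS.le_self_add _ _)
  · calc N • q₁ ≤ y 1 + t := hqt
      _ ≤ y 0 + p' + t := by gcongr; exact hgap 0
      _ = y 0 + t + p' := add_right_comm _ _ _

/-- In the proof, `a`, `b`, `c` are approximations of `f - y`, `f - q`, `g - y`, and `e` bounds the
error made in approximating `f`. -/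
theorem exists_add_le_add_le (rm : RealMul S) (hS : CuO6 S) {y₀ y₁ y₂ f₀ f₁ e : S}
    (hy₀₁ : CC y₀ y₁) (hy₁₂ : CC y₁ y₂) (hyf : y₂ ≤ f₁) (hyg : y₁ ≤ g) (hf : CC f₀ f₁)
    (hfe : f₁ ≤ f₀ + e) (hne : f₀ ≤ n • e) (hq : CC q q') (hqf : q' ≤ f₀) (hqg : q' ≤ g) :
    ∃ t, y₀ + t ≤ f₁ ∧ y₀ + t ≤ g ∧ q ≤ y₂ + t + e := by
  have := hS.isOrderedAddMonoid
  have hfne : f₀ + e ≤ (n + 1) • e := by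
    rw [succ_nsmul]
    gcongr
  obtain ⟨a, haf, hfa⟩ := hS.O5 hy₁₂ hyf
  obtain ⟨b, hbf, hfb⟩ := hS.O5 hq hqf
  obtain ⟨c, hcg, hgc⟩ := hS.O5 hy₀₁ hyg
  have ha_le : a ≤ (b + e) + c := by
    refine rm.le_of_add_le_add_right hS.toCuO5 (z := y₁) (n := n + 1) ?_ ?_
    · calc y₁ ≤ (n + 1) • e := (hy₁₂.le.trans (hyf.trans hfe)).trans hfne
        _ ≤ (n + 1) • ((b + e) + c) := by
          gcongr
          exact (hS.le_add_self e b).trans (hS.le_self_add _ _)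
    · calc a + y₁ ≤ f₀ + e := (add_comm a y₁).trans_le (haf.trans hfe)
        _ ≤ (q' + b) + e := by gcongr
        _ ≤ ((y₁ + c) + b) + e := by gcongr; exact hqg.trans hgc
        _ = ((b + e) + c) + y₁ := by abel
  obtain ⟨a', ha', hfa'⟩ := hS.exists_cc_le_add hf hfa
  obtain ⟨s, t, hst, hsb, -, htc, hta⟩ := hS.O6 ha_le ha'
  refine ⟨t, (add_le_add hy₀₁.le hta).trans haf, (by gcongr : y₀ + t ≤ y₀ + c).trans hcg, ?_⟩
  refine rm.le_of_add_le_add_right hS.toCuO5 (z := s) (n := n + 1) ?_ ?_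
  · calc s ≤ b + e := hsb
      _ ≤ f₀ + e := by gcongr; exact (hS.le_add_self b q).trans hbf
      _ ≤ (n + 1) • e := hfne
      _ ≤ (n + 1) • (y₂ + t + e) := by gcongr; exact hS.le_add_self _ _
  · calc q + s ≤ q + (b + e) := by gcongr
      _ = (q + b) + e := (add_assoc q b e).symm
      _ ≤ (y₂ + a') + e := add_le_add_left (hbf.trans hfa') e
      _ ≤ (y₂ + (s + t)) + e := by gcongr
      _ = (y₂ + t + e) + s := by abel

theorem exists_upper_bound_of_le_nsmul (rm : RealMul S) (hS : CuO6 S) (hfg : f ≤ n • g)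
    (hp : CC p p') (hq : CC q q') (hpf : p' ≤ f) (hpg : p' ≤ g) (hqf : q' ≤ f) (hqg : q' ≤ g) :
    ∃ r, r ≤ f ∧ r ≤ g ∧ p ≤ r ∧ q ≤ r := by
  have := hS.isOrderedAddMonoid
  obtain ⟨p₁, hpp₁, hp₁⟩ := hS.exists_cc_between hp
  obtain ⟨p₂, hp₁p₂, hp₂⟩ := hS.exists_cc_between hp₁
  obtain ⟨q₁, hqq₁, hq₁⟩ := hS.exists_cc_between hq
  obtain ⟨q₂, hq₁q₂, hq₂⟩ := hS.exists_cc_between hq₁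
  obtain ⟨z, hzf, hpz, hqz⟩ :=
    hS.directedOn_cc f p₂ (hp₂.mono le_rfl hpf) q₂ (hq₂.mono le_rfl hqf)
  have hp₂f : p₂ ≤ f := hp₂.le.trans hpf
  have hp₂g : p₂ ≤ g := hp₂.le.trans hpg
  refine rm.exists_le_of_forall_nsmul_le hpp₁ hqq₁ (n + 3) fun N => ?_
  obtain ⟨y, hy, hpy, hyp, hygap⟩ := hS.exists_seq_cc_nsmul hp₁p₂ N
  obtain ⟨F, hF, hzF, hFf, hFgap⟩ := hS.exists_seq_cc_nsmul hzf N
  obtain ⟨t, htf, htg, hqt⟩ := rm.exists_add_le_add_le hS (g := N • g) (hy 0) (hy 1)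
    ((hyp 2).trans <| (nsmul_le_nsmul_right hpz N).trans <| hzF.trans (hF 0).le)
    ((hyp 1).trans (by gcongr)) (hF 0) (hFgap 0) (hFf 0) (hS.cc_nsmul hq₁q₂ N)
    ((nsmul_le_nsmul_right hqz N).trans hzF) (nsmul_le_nsmul_right (hq₂.le.trans hqg) N)
  refine ⟨y 0 + t + (2 • p₂ + f), ?_, ?_, ?_, ?_⟩
  · calc y 0 + t + (2 • p₂ + f) ≤ N • f + (2 • f + f) := by gcongr; exact htf.trans (hFf 1)
      _ ≤ N • f + (2 • f + f) + n • f := hS.le_self_add _ _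
      _ = (N + (n + 3)) • f := by module
  · calc y 0 + t + (2 • p₂ + f) ≤ N • g + (2 • g + n • g) := by gcongr
      _ ≤ N • g + (2 • g + n • g) + g := hS.le_self_add _ _
      _ = (N + (n + 3)) • g := by module
  · rw [add_assoc]
    exact hpy.trans (hS.le_self_add _ _)
  · calc N • q₁ ≤ y 2 + t + f := hqt
      _ ≤ (y 0 + p₂ + p₂) + t + f := by
        gcongr
        exact (hygap 1).trans (by gcongr; exact hygap 0)
      _ = y 0 + t + (2 • p₂ + f) := by rw [two_nsmul]; abel

end RealMul

end

theorem directed_lower_set_general {S : Type*} [AddCommMonoid S] [PartialOrder S]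
    (hS : CuO6 S) (rm : RealMul S) (f g : S) :
    DirectedOn (· ≤ ·) {h : S | ∃ h' : S, CC h h' ∧ h' ≤ f ∧ h' ≤ g} := by
  rintro p ⟨p', hp, hpf, hpg⟩ q ⟨q', hq, hqf, hqg⟩
  have := hS.isOrderedAddMonoid
  obtain ⟨p₁, hpp₁, hp₁⟩ := hS.exists_cc_between hp
  obtain ⟨p₂, hp₁p₂, hp₂⟩ := hS.exists_cc_between hp₁
  obtain ⟨q₁, hqq₁, hq₁⟩ := hS.exists_cc_between hq
  obtain ⟨q₂, hq₁q₂, hq₂⟩ := hS.exists_cc_between hq₁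
  obtain ⟨z, hzf, hzpq, hpz, hqz⟩ := rm.exists_upper_bound_le_add hS hp₂ hq₂ hpf hqf
  have hzg : z ≤ 2 • g := hzpq.trans ((add_le_add hpg hqg).trans_eq (two_nsmul g).symm)
  obtain ⟨s, hsz, hsg, hps, hqs⟩ := rm.exists_upper_bound_of_le_nsmul hS hzg hp₁p₂ hq₁q₂ hpz
    (hp₂.le.trans hpg) hqz (hq₂.le.trans hqg)
  obtain ⟨r, hr, hpr, hqr⟩ :=
    hS.directedOn_cc s p (hpp₁.mono le_rfl hps) q (hqq₁.mono le_rfl hqs)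
  exact ⟨r, ⟨s, hr, hsz.trans hzf, hsg⟩, hpr, hqr⟩

/-- the set `{h : ∃ h', h ≪ h' ≤ f, g}` is upward directed when `f ∝ g`. -/
theorem directed_lower_set {S : Type*} [AddCommMonoid S] [PartialOrder S]
    (hS : CuO6 S) (rm : RealMul S) (f g : S) (hfg : ∃ n : ℕ, f ≤ n • g) :
    ∀ p ∈ {h : S | ∃ h' : S, CC h h' ∧ h' ≤ f ∧ h' ≤ g},
      ∀ q ∈ {h : S | ∃ h' : S, CC h h' ∧ h' ≤ f ∧ h' ≤ g},
        ∃ r ∈ {h : S | ∃ h' : S, CC h h' ∧ h' ≤ f ∧ h' ≤ g}, p ≤ r ∧ q ≤ r :=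
  directed_lower_set_general hS rm f g
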